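/- The formula ¬⟨∅⟩¬p → ⟨AG⟩p (for an atomic proposition p) is not valid in all deterministic general concurrent game models: there exist a deterministic general concurrent game model M and a state s of M such that M, s ⊭ ¬⟨∅⟩¬p → ⟨AG⟩p. -/

import Mathlib

/-!
The formula fails at a dead end: if every action profile has an empty outcome at `s`, then no
joint action of any coalition is available at `s`, so every `⟨C⟩φ` is false there. In particular
`¬⟨∅⟩¬p` is true and `⟨AG⟩p` is false. Determinism does not exclude dead ends, since it only
constrains the available joint actions.
-/

namespace CL

/-- The language Φ of coalition logic over a set of agents, with atomic
propositions drawn from ℕ (a countable set). -/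
inductive Formula (Agent : Type) : Type
  | top : Formula Agent
  | atom : ℕ → Formula Agent
  | neg : Formula Agent → Formula Agent
  | and : Formula Agent → Formula Agent → Formula Agent
  | coal : Set Agent → Formula Agent → Formula Agent

namespace Formula

variable {Agent : Type}

def bot : Formula Agent := neg top

def or (φ ψ : Formula Agent) : Formula Agent := neg (and (neg φ) (neg ψ))

def imp (φ ψ : Formula Agent) : Formula Agent := or (neg φ) ψ

def iff (φ ψ : Formula Agent) : Formula Agent := and (imp φ ψ) (imp ψ φ)

end Formula

/-- The three frame properties: seriality, independence of agents, determinism.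
`ES` is represented by `Set P3`, the eight subsets of {S, I, D}. -/
inductive P3 : Type
  | S | I | D
deriving DecidableEq
section
open Classical

/-- Merge of two joint actions of disjoint coalitions. -/
noncomputable def jaUnion {Agent Act : Type} {C D : Set Agent}
    (σC : C → Act) (σD : D → Act) : ↥(C ∪ D) → Act :=
  fun a =>
    if h : a.1 ∈ C then σC ⟨a.1, h⟩
    else σD ⟨a.1, ((Set.mem_union _ _ _).mp a.2).resolve_left h⟩

end

/-- A general concurrent game frame: a nonempty set of states, a nonempty set
of actions, and an outcome function for the grand coalition.  Joint actions of
a coalition C are functions C → Act; action profiles are functions Agent → Act. -/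
structure Frame (Agent : Type) where
  State : Type
  state_nonempty : Nonempty State
  Act : Type
  act_nonempty : Nonempty Act
  out : State → (Agent → Act) → Set State

namespace Frame

variable {Agent : Type} (F : Frame Agent)

/-- Outcome function for a coalition C. -/
def outC (C : Set Agent) (s : F.State) (σ : C → F.Act) : Set F.State :=
  ⋃ (τ : Agent → F.Act) (_ : ∀ a : C, τ a.1 = σ a), F.out s τ

/-- Availability function: the available joint actions of C at s. -/
def aja (C : Set Agent) (s : F.State) : Set (C → F.Act) :=
  {σ | (F.outC C s σ).Nonempty}

def Serial : Prop := ∀ (s : F.State) (C : Set Agent), (F.aja C s).Nonempty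

def Independent : Prop :=
  ∀ (s : F.State) (C D : Set Agent), C ∩ D = ∅ →
    ∀ σC ∈ F.aja C s, ∀ σD ∈ F.aja D s, jaUnion σC σD ∈ F.aja (C ∪ D) s

def Deterministic : Prop :=
  ∀ s : F.State, ∀ σ ∈ F.aja Set.univ s, ∃ t : F.State, F.outC Set.univ s σ = {t}

end Frame

/-- A general concurrent game model: a frame together with a labeling function
(atomic propositions are drawn from the countable set ℕ). -/
structure Model (Agent : Type) extends Frame Agent where
  lab : State → Set ℕ

namespace Model

variable {Agent : Type} (M : Model Agent)

/-- Satisfaction: M, s ⊨ φ. -/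
def sat : Formula Agent → M.State → Prop
  | .top, _ => True
  | .atom n, s => n ∈ M.lab s
  | .neg φ, s => ¬ sat φ s
  | .and φ ψ, s => sat φ s ∧ sat ψ s
  | .coal C φ, s => ∃ σ ∈ M.toFrame.aja C s, ∀ t ∈ M.toFrame.outC C s σ, sat φ t

/-- M is an X-model (for X ∈ ES). -/
def IsX (X : Set P3) : Prop :=
  (P3.S ∈ X → M.toFrame.Serial) ∧ (P3.I ∈ X → M.toFrame.Independent) ∧
    (P3.D ∈ X → M.toFrame.Deterministic)

end Model

/-- φ is X-valid: φ holds at every pointed X-model. -/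
def XValid {Agent : Type} (X : Set P3) (φ : Formula Agent) : Prop :=
  ∀ M : Model Agent, M.IsX X → ∀ s : M.State, M.sat φ s

/-- φ is X-satisfiable: φ holds at some pointed X-model. -/
def XSat {Agent : Type} (X : Set P3) (φ : Formula Agent) : Prop :=
  ∃ M : Model Agent, M.IsX X ∧ ∃ s : M.State, M.sat φ s

/-- φ ⊨_XL ψ : ψ holds at every pointed X-model at which φ holds. -/
def XConseq {Agent : Type} (X : Set P3) (φ ψ : Formula Agent) : Prop :=
  ∀ M : Model Agent, M.IsX X → ∀ s : M.State, M.sat φ s → M.sat ψ s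

namespace Frame

variable {Agent : Type} {F : Frame Agent}

theorem mem_outC {C : Set Agent} {s t : F.State} {σ : C → F.Act} :
    t ∈ F.outC C s σ ↔ ∃ τ : Agent → F.Act, (∀ a : C, τ a = σ a) ∧ t ∈ F.out s τ := by
  simp only [outC, Set.mem_iUnion, exists_prop]

theorem outC_univ (s : F.State) (σ : ↥(Set.univ : Set Agent) → F.Act) :
    F.outC Set.univ s σ = F.out s fun a => σ ⟨a, Set.mem_univ a⟩ := by
  ext t
  rw [mem_outC]
  constructor
  · rintro ⟨τ, hτ, ht⟩
    obtain rfl : τ = fun a => σ ⟨a, Set.mem_univ a⟩ := funext fun a => hτ ⟨a, Set.mem_univ a⟩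
    exact ht
  · exact fun ht => ⟨_, fun _ => rfl, ht⟩

theorem deterministic_of_subsingleton_out (h : ∀ s τ, (F.out s τ).Subsingleton) :
    F.Deterministic := by
  rintro s σ ⟨t, ht⟩
  have hσ : (F.outC Set.univ s σ).Subsingleton := outC_univ s σ ▸ h s _
  exact ⟨t, hσ.eq_singleton_of_mem ht⟩

/-- A dead end is a state at which no action profile has an outcome. Such states witness the
failure of seriality. -/
def IsDeadEnd (F : Frame Agent) (s : F.State) : Prop :=
  ∀ τ, F.out s τ = ∅

theorem IsDeadEnd.aja_eq_empty {s : F.State} (hs : F.IsDeadEnd s) (C : Set Agent) :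
    F.aja C s = ∅ := by
  refine Set.eq_empty_of_forall_notMem ?_
  rintro σ ⟨t, ht⟩
  obtain ⟨τ, -, hτ⟩ := mem_outC.mp ht
  exact Set.notMem_empty t (hs τ ▸ hτ)

end Frame

namespace Model

variable {Agent : Type} {M : Model Agent} {s : M.State}

theorem sat_imp {φ ψ : Formula Agent} : M.sat (φ.imp ψ) s ↔ (M.sat φ s → M.sat ψ s) := by
  simp only [Formula.imp, Formula.or, sat]
  tauto

theorem not_sat_coal_of_isDeadEnd (hs : M.toFrame.IsDeadEnd s) (C : Set Agent)
    (φ : Formula Agent) : ¬ M.sat (.coal C φ) s := by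
  rintro ⟨σ, hσ, -⟩
  exact Set.notMem_empty σ (hs.aja_eq_empty C ▸ hσ)

/-- The model whose only state is a dead end, used as the countermodel. It has a single action
and makes every atomic proposition false. -/
def deadEnd (Agent : Type) : Model Agent where
  State := Unit
  state_nonempty := inferInstance
  Act := Unit
  act_nonempty := inferInstance
  out _ _ := ∅
  lab _ := ∅

theorem isDeadEnd_deadEnd (s : (deadEnd Agent).State) : (deadEnd Agent).toFrame.IsDeadEnd s :=
  fun _ => rfl

theorem deterministic_deadEnd : (deadEnd Agent).toFrame.Deterministic :=
  Frame.deterministic_of_subsingleton_out fun _ _ => Set.subsingleton_empty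

end Model

theorem not_valid_on_deterministic_general {Agent : Type} (C D : Set Agent)
    (φ ψ : Formula Agent) :
    ∃ (M : Model Agent) (s : M.State), M.toFrame.Deterministic ∧
      ¬ M.sat ((Formula.neg (Formula.coal C φ)).imp (Formula.coal D ψ)) s := by
  refine ⟨Model.deadEnd Agent, (), Model.deterministic_deadEnd, fun h => ?_⟩
  have hdead := Model.isDeadEnd_deadEnd (Agent := Agent) ()
  have antecedent := Model.not_sat_coal_of_isDeadEnd hdead C φ
  exact Model.not_sat_coal_of_isDeadEnd hdead D ψ (Model.sat_imp.mp h antecedent)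

/-- ¬⟨∅⟩¬p → ⟨AG⟩p is not valid in all deterministic general concurrent game
models: there are a deterministic model M and a state s at which it fails. -/
theorem not_valid_on_deterministic {Agent : Type} [Fintype Agent] (p : ℕ) :
    ∃ (M : Model Agent) (s : M.State), M.toFrame.Deterministic ∧
      ¬ M.sat ((Formula.neg (Formula.coal ∅ (Formula.neg (Formula.atom p)))).imp
        (Formula.coal Set.univ (Formula.atom p))) s :=
  not_valid_on_deterministic_general ∅ Set.univ _ _

end CL
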